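/- arXiv:2009.11057 — 2 statements merged into one kernel-verified Lean document; each statement's English description precedes it below -/
import Mathlib

section
/- Let ρ : ℝ^d → ℝ be a C² function with ρ_min ≤ ρ ≤ R and |∇ρ| ≤ K on ℝ^d, where ρ_min > 0, and let v : ℝ^d → ℝ^d be a bounded measurable vector field. Fix x ∈ ℝ^d, h ∈ (0,1], ℓ₀ > 0 and constants A, B, M > 0, and suppose that for every ℓ ∈ (0, ℓ₀]: δv(ℓ;x) ≤ A ℓ^h, δρ(ℓ;x) ≤ B ℓ, and ρ̄_ℓ(x) ≥ 1/M. Then there exists a constant C, depending only on G, d, ħ, m, R, A, B, M, K, ρ_min, h and ℓ₀, such that the quantum baropycnal work satisfies |Λ^{(Σ)}_ℓ(x)| ≤ C ℓ^{h−1} for all ℓ ∈ (0, ℓ₀]. -/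
/-!
A derivative of a coarse-grained field falls on the kernel, and every derivative of `G_ℓ` costs a
factor `ℓ⁻¹` in `L¹` (`pd_resc`, `integral_abs_resc`). In `∇·Σ̄_ℓ` the quadratic part of `Σ` is
bounded by `K² / (4ρ_min)`, so it contributes `O(ℓ⁻¹)`. The Laplacian `Δρ` has no a priori bound,
but a further integration by parts replaces it by `∇ρ`, which is bounded by `K`, at the price of a
second derivative of the kernel; it contributes `O(ℓ⁻²)`. Hence `∇·Σ̄_ℓ = O(ℓ⁻²)` for
`ℓ ≤ ℓ₀` (`norm_divCgStress_le`).

The cumulant depends on increments only,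
`τ̄_ℓ(ρ, v) = ∫ G_ℓ δρ δv - (∫ G_ℓ δρ) (∫ G_ℓ δv)`, so that `|τ̄_ℓ(ρ, v)| ≤ 2AB ℓ^{1+h}`
(`norm_tauV_le`). The product of the two estimates with `1/ρ̄_ℓ ≤ M` is of order `ℓ^{h-1}`.
-/

open MeasureTheory Metric
open scoped RealInnerProductSpace ENNReal

noncomputable section

abbrev Euc (d : ℕ) := EuclideanSpace ℝ (Fin d)

namespace QT

variable {d : ℕ}

/-- `G` is a mollifier: smooth, nonnegative, supported in the open unit ball, integral one. -/
structure IsMollifier {d : ℕ} (G : Euc d → ℝ) : Prop where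
  smooth : ContDiff ℝ (⊤ : ℕ∞) G
  nonneg : ∀ r, 0 ≤ G r
  supp : tsupport G ⊆ ball (0 : Euc d) 1
  integral_one : ∫ r, G r = 1

/-- The rescaled mollifier `G_ℓ(r) = ℓ^{-d} G(r/ℓ)`. -/
def resc (G : Euc d → ℝ) (ℓ : ℝ) (r : Euc d) : ℝ := (ℓ ^ d)⁻¹ * G (ℓ⁻¹ • r)

/-- Coarse-grained field `ā_ℓ(x) = ∫ G_ℓ(r) a(x+r) dr`. -/
def cg {E : Type*} [NormedAddCommGroup E] [NormedSpace ℝ E]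
    (G : Euc d → ℝ) (ℓ : ℝ) (a : Euc d → E) (x : Euc d) : E :=
  ∫ r, resc G ℓ r • a (x + r)

/-- Increment `δa(r;x) = a(x+r) - a(x)`. -/
def incr {E : Type*} [NormedAddCommGroup E] (a : Euc d → E) (r x : Euc d) : E :=
  a (x + r) - a x

/-- `δa(ℓ;x) = sup_{|r|<ℓ} |δa(r;x)|`. -/
def supIncr {E : Type*} [NormedAddCommGroup E] (a : Euc d → E) (ℓ : ℝ) (x : Euc d) : ℝ :=
  ⨆ r ∈ ball (0 : Euc d) ℓ, ‖incr a r x‖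

/-- Second-order coarse-graining cumulant `τ̄_ℓ(f,g)`. -/
def tau2 (G : Euc d → ℝ) (ℓ : ℝ) (f g : Euc d → ℝ) (x : Euc d) : ℝ :=
  cg G ℓ (fun y => f y * g y) x - cg G ℓ f x * cg G ℓ g x

/-- `τ̄_ℓ(ρ, v)` for a scalar density and a vector field. -/
def tauV (G : Euc d → ℝ) (ℓ : ℝ) (ρ : Euc d → ℝ) (v : Euc d → Euc d) (x : Euc d) : Euc d :=
  cg G ℓ (fun y => ρ y • v y) x - cg G ℓ ρ x • cg G ℓ v x

/-- `i`-th standard basis vector. -/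
def e (d : ℕ) (i : Fin d) : Euc d := EuclideanSpace.single i (1 : ℝ)

/-- Partial derivative `∂_i f(x)`. -/
def pd (i : Fin d) (f : Euc d → ℝ) (x : Euc d) : ℝ := fderiv ℝ f x (e d i)

/-- Laplacian. -/
def lap (f : Euc d → ℝ) (x : Euc d) : ℝ := ∑ i, pd i (fun y => pd i f y) x

/-- Gradient matrix `(∇v)_{ij} = ∂_i v_j`. -/
def gradMat (v : Euc d → Euc d) (x : Euc d) : Matrix (Fin d) (Fin d) ℝ :=
  Matrix.of fun i j => pd i (fun y => v y j) x

/-- Frobenius norm of a matrix. -/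
def frobNorm (A : Matrix (Fin d) (Fin d) ℝ) : ℝ := Real.sqrt (∑ i, ∑ j, A i j ^ 2)

/-- Frobenius inner product `A : B`. -/
def frobInner (A B : Matrix (Fin d) (Fin d) ℝ) : ℝ := ∑ i, ∑ j, A i j * B i j

/-- Favre-averaged velocity `ṽ_ℓ = \overline{(ρv)}_ℓ/ρ̄_ℓ` where `ρ̄_ℓ > 0`, `0` otherwise. -/
def favre (G : Euc d → ℝ) (ℓ : ℝ) (ρ : Euc d → ℝ) (v : Euc d → Euc d) (x : Euc d) : Euc d :=
  if 0 < cg G ℓ ρ x then (cg G ℓ ρ x)⁻¹ • cg G ℓ (fun y => ρ y • v y) x else 0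

/-- Favre stress `τ̃_ℓ(v,v) = \overline{(ρ v⊗v)}_ℓ/ρ̄_ℓ − ṽ_ℓ ⊗ ṽ_ℓ`. -/
def favreStress (G : Euc d → ℝ) (ℓ : ℝ) (ρ : Euc d → ℝ) (v : Euc d → Euc d) (x : Euc d) :
    Matrix (Fin d) (Fin d) ℝ :=
  Matrix.of fun i j =>
    (cg G ℓ ρ x)⁻¹ * cg G ℓ (fun y => ρ y * (v y i * v y j)) x
      - favre G ℓ ρ v x i * favre G ℓ ρ v x j

/-- Deformation work `Π_ℓ = −ρ̄_ℓ ∇ṽ_ℓ : τ̃_ℓ(v,v)`. -/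
def deformWork (G : Euc d → ℝ) (ℓ : ℝ) (ρ : Euc d → ℝ) (v : Euc d → Euc d) (x : Euc d) : ℝ :=
  -(cg G ℓ ρ x * frobInner (gradMat (favre G ℓ ρ v) x) (favreStress G ℓ ρ v x))

/-- The periodic box `[0,𝓛]^d`. -/
def box (d : ℕ) (L : ℝ) : Set (Euc d) := {x | ∀ i, x i ∈ Set.Icc (0 : ℝ) L}

/-- Normalized measure on the periodic box, so that `eLpNorm · p (boxMeasure d 𝓛)`
is the normalized `L^p` norm `(𝓛^{-d}∫_{[0,𝓛]^d}|f|^p)^{1/p}` (ess-sup for `p = ∞`). -/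
def boxMeasure (d : ℕ) (L : ℝ) : Measure (Euc d) :=
  (ENNReal.ofReal (L ^ d))⁻¹ • (volume.restrict (box d L))

/-- `𝓛`-periodicity in each coordinate. -/
def PeriodicF {E : Type*} (L : ℝ) (f : Euc d → E) : Prop :=
  ∀ (x : Euc d) (i : Fin d), f (x + EuclideanSpace.single i L) = f x

/-- Quantum stress `Σ = (ħ²/4m²)(Δρ)I − (ħ²/m²)∇√ρ ⊗ ∇√ρ`. -/
def qStress (hb m : ℝ) (ρ : Euc d → ℝ) (x : Euc d) : Matrix (Fin d) (Fin d) ℝ :=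
  Matrix.of fun i j =>
    (hb ^ 2 / (4 * m ^ 2)) * lap ρ x * (if i = j then (1 : ℝ) else 0)
      - (hb ^ 2 / m ^ 2) * (gradient (fun y => Real.sqrt (ρ y)) x i
          * gradient (fun y => Real.sqrt (ρ y)) x j)

/-- Coarse-grained quantum stress `Σ̄_ℓ`. -/
def cgStress (G : Euc d → ℝ) (ℓ hb m : ℝ) (ρ : Euc d → ℝ) (x : Euc d) :
    Matrix (Fin d) (Fin d) ℝ :=
  Matrix.of fun i j => cg G ℓ (fun z => qStress hb m ρ z i j) x

/-- Row-wise divergence of the coarse-grained quantum stress, `(∇·Σ̄_ℓ)_j = ∑_i ∂_i (Σ̄_ℓ)_{ij}`. -/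
def divCgStress (G : Euc d → ℝ) (ℓ hb m : ℝ) (ρ : Euc d → ℝ) (x : Euc d) : Euc d :=
  (EuclideanSpace.equiv (Fin d) ℝ).symm
    (fun j => ∑ i, pd i (fun y => cgStress G ℓ hb m ρ y i j) x)

/-- Quantum baropycnal work `Λ^{(Σ)}_ℓ = −(1/ρ̄_ℓ)(∇·Σ̄_ℓ)·τ̄_ℓ(ρ,v)`. -/
def qBaroWork (G : Euc d → ℝ) (ℓ hb m : ℝ) (ρ : Euc d → ℝ) (v : Euc d → Euc d) (x : Euc d) : ℝ :=
  -((cg G ℓ ρ x)⁻¹ * ⟪divCgStress G ℓ hb m ρ x, tauV G ℓ ρ v x⟫)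

end QT

namespace QT

/-! ### Partial derivatives and rescaled kernels -/

lemma contDiff_pd {d : ℕ} {n k : WithTop ℕ∞} {f : Euc d → ℝ} (hf : ContDiff ℝ k f)
    (hn : n + 1 ≤ k) (i : Fin d) : ContDiff ℝ n (pd i f) :=
  (hf.fderiv_right hn).clm_apply contDiff_const

lemma hasCompactSupport_pd {d : ℕ} {f : Euc d → ℝ} (hf : HasCompactSupport f) (i : Fin d) :
    HasCompactSupport (pd i f) :=
  hf.fderiv_apply (𝕜 := ℝ) (e d i)

lemma gradient_coord {d : ℕ} (f : Euc d → ℝ) (x : Euc d) (i : Fin d) :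
    gradient f x i = pd i f x := by
  have h := inner_gradient_left (𝕜 := ℝ) (f := f) (x := x) (y := e d i)
  rw [pd, ← h, e, EuclideanSpace.inner_single_right]
  simp

lemma norm_e {d : ℕ} (i : Fin d) : ‖e d i‖ = 1 := by simp [e]

lemma abs_pd_le {d : ℕ} (f : Euc d → ℝ) (x : Euc d) (i : Fin d) :
    |pd i f x| ≤ ‖gradient f x‖ := by
  rw [pd, ← inner_gradient_left (𝕜 := ℝ)]
  refine (abs_real_inner_le_norm _ _).trans ?_
  rw [norm_e, mul_one]

lemma contDiff_resc {d : ℕ} {n : WithTop ℕ∞} {φ : Euc d → ℝ} (hφ : ContDiff ℝ n φ) (ℓ : ℝ) :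
    ContDiff ℝ n (resc φ ℓ) :=
  contDiff_const.mul (hφ.comp (contDiff_id.const_smul ℓ⁻¹))

lemma hasCompactSupport_resc {d : ℕ} {φ : Euc d → ℝ} (hφ : HasCompactSupport φ) {ℓ : ℝ}
    (hℓ : 0 < ℓ) : HasCompactSupport (resc φ ℓ) :=
  (hφ.comp_smul (inv_ne_zero hℓ.ne')).mul_left

lemma pd_resc {d : ℕ} {φ : Euc d → ℝ} (hφ : Differentiable ℝ φ) (ℓ : ℝ) (i : Fin d) :
    pd i (resc φ ℓ) = fun r => ℓ⁻¹ * resc (pd i φ) ℓ r := by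
  funext r
  have h1 : HasFDerivAt (fun r : Euc d => ℓ⁻¹ • r) (ℓ⁻¹ • ContinuousLinearMap.id ℝ (Euc d)) r :=
    (hasFDerivAt_id r).const_smul ℓ⁻¹
  have h2 : HasFDerivAt (resc φ ℓ)
      ((ℓ ^ d)⁻¹ • (fderiv ℝ φ (ℓ⁻¹ • r)).comp (ℓ⁻¹ • ContinuousLinearMap.id ℝ (Euc d))) r :=
    ((hφ (ℓ⁻¹ • r)).hasFDerivAt.comp r h1).const_mul _
  simp only [pd, resc, h2.fderiv]
  simp
  ring

/-- Rescaling preserves the `L¹` norm of a kernel. -/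
lemma integral_abs_resc {d : ℕ} (φ : Euc d → ℝ) {ℓ : ℝ} (hℓ : 0 < ℓ) :
    ∫ r, |resc φ ℓ r| = ∫ r, |φ r| := by
  have h1 : ∀ r, |resc φ ℓ r| = (ℓ ^ d)⁻¹ * |φ (ℓ⁻¹ • r)| := fun r => by
    rw [resc, abs_mul, abs_of_pos (by positivity : 0 < (ℓ ^ d)⁻¹)]
  simp only [h1]
  rw [integral_const_mul,
    Measure.integral_comp_inv_smul_of_nonneg volume (fun r => |φ r|) hℓ.le]
  simp only [finrank_euclideanSpace, Fintype.card_fin, smul_eq_mul]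
  rw [← mul_assoc, inv_mul_cancel₀ (by positivity), one_mul]

lemma integral_resc {d : ℕ} {G : Euc d → ℝ} (hG : IsMollifier G) {ℓ : ℝ} (hℓ : 0 < ℓ) :
    ∫ r, resc G ℓ r = 1 := by
  have h0 : ∀ r, 0 ≤ resc G ℓ r := fun r => mul_nonneg (by positivity) (hG.nonneg _)
  have := integral_abs_resc G hℓ
  simpa only [abs_of_nonneg (h0 _), abs_of_nonneg (hG.nonneg _), hG.integral_one] using this

/-! ### Averages against a compactly supported kernel -/

lemma integrable_kernel_mul {d : ℕ} {φ a : Euc d → ℝ} (hφ : Continuous φ)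
    (hc : HasCompactSupport φ) (ha : Continuous a) (x : Euc d) :
    Integrable fun r => φ r * a (x + r) :=
  (hφ.mul (ha.comp (continuous_const.add continuous_id))).integrable_of_hasCompactSupport
    hc.mul_right

/-- A derivative of a coarse-grained field falls on the kernel, with a sign because the
average `∫ φ(r) a(x + r) dr` is a correlation rather than a convolution. -/
lemma pd_average {d : ℕ} {φ a : Euc d → ℝ} (hφ : ContDiff ℝ 1 φ) (hc : HasCompactSupport φ)
    (ha : Continuous a) (i : Fin d) (x : Euc d) :
    pd i (fun y => ∫ r, φ r * a (y + r)) x = -∫ r, pd i φ r * a (x + r) := by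
  set ψ : Euc d → ℝ := fun r => φ (-r) with hψ
  have hψ1 : ContDiff ℝ 1 ψ := hφ.comp contDiff_neg
  have hψc : HasCompactSupport ψ := hc.comp_homeomorph (Homeomorph.neg _)
  have heq : (fun y => ∫ r, φ r * a (y + r))
      = convolution ψ a (ContinuousLinearMap.mul ℝ ℝ) volume := by
    funext y
    rw [convolution, ← integral_neg_eq_self]
    simp [hψ, sub_eq_add_neg]
  have hd := hψc.hasFDerivAt_convolution_left (ContinuousLinearMap.mul ℝ ℝ) (μ := volume) hψ1
    ha.locallyIntegrable x
  have hi : Integrable fun t => ((ContinuousLinearMap.mul ℝ ℝ).precompL (Euc d))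
      (fderiv ℝ ψ t) (a (x - t)) :=
    (hψc.fderiv (𝕜 := ℝ)).convolutionExists_left _ (hψ1.continuous_fderiv one_ne_zero)
      ha.locallyIntegrable x
  rw [heq, pd, hd.fderiv, convolution, ContinuousLinearMap.integral_apply hi,
    ← integral_neg_eq_self, ← integral_neg]
  congr 1
  funext r
  have h3 : fderiv ℝ ψ (-r) = -fderiv ℝ φ r := by
    have h4 : HasFDerivAt (fun r : Euc d => -r) (-ContinuousLinearMap.id ℝ (Euc d)) (-r) :=
      (hasFDerivAt_id (-r)).neg
    have h5 : HasFDerivAt φ (fderiv ℝ φ r) (-(-r)) := by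
      rw [neg_neg]; exact (hφ.differentiable one_ne_zero r).hasFDerivAt
    have h6 : HasFDerivAt ψ _ (-r) := h5.comp (-r) h4
    rw [h6.fderiv]
    ext; simp
  rw [ContinuousLinearMap.precompL_apply, h3]
  simp [pd]

/-- Integration by parts against a compactly supported kernel. -/
lemma average_pd {d : ℕ} {φ a : Euc d → ℝ} (hφ : ContDiff ℝ 1 φ) (hc : HasCompactSupport φ)
    (ha : ContDiff ℝ 1 a) (i : Fin d) (x : Euc d) :
    ∫ r, φ r * pd i a (x + r) = -∫ r, pd i φ r * a (x + r) := by
  have h1 : ∀ r, pd i a (x + r) = fderiv ℝ (fun r => a (x + r)) r (e d i) := fun r => by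
    rw [pd, fderiv_comp_add_left]
  have hp : Continuous (pd i φ) := (contDiff_pd (n := 0) hφ (by simp) i).continuous
  have hq : Continuous (pd i a) := (contDiff_pd (n := 0) ha (by simp) i).continuous
  have h2 := integrable_kernel_mul hφ.continuous hc hq x
  simp only [h1] at h2 ⊢
  exact integral_mul_fderiv_eq_neg_fderiv_mul_of_integrable
    (integrable_kernel_mul hp (hasCompactSupport_pd hc i) ha.continuous x) h2
    (integrable_kernel_mul hφ.continuous hc ha.continuous x)
    (fun r _ => hφ.differentiable one_ne_zero r)
    (fun r _ => (ha.differentiable one_ne_zero _).comp r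
      ((differentiableAt_const x).add differentiableAt_id))

lemma abs_average_le {d : ℕ} {φ a : Euc d → ℝ} (hφ : Continuous φ) (hc : HasCompactSupport φ)
    {S : ℝ} (ha : ∀ y, |a y| ≤ S) (x : Euc d) :
    |∫ r, φ r * a (x + r)| ≤ S * ∫ r, |φ r| := by
  rw [← integral_const_mul, ← Real.norm_eq_abs]
  refine norm_integral_le_of_norm_le
    ((hφ.abs.integrable_of_hasCompactSupport hc.norm).const_mul S) (.of_forall fun r => ?_)
  rw [Real.norm_eq_abs, abs_mul, mul_comm]
  exact mul_le_mul_of_nonneg_right (ha _) (abs_nonneg _)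

/-! ### The coarse-grained quantum stress -/

/-- Pointwise form of `|∂ᵢ√ρ ∂ⱼ√ρ| = |∂ᵢρ ∂ⱼρ| / (4ρ) ≤ K² / (4ρ_min)`. -/
lemma abs_gradient_sqrt_mul_le {d : ℕ} {ρ : Euc d → ℝ} (hρ : ContDiff ℝ 2 ρ) {ρmin K : ℝ}
    (hρmin : 0 < ρmin) (hlow : ∀ y, ρmin ≤ ρ y) (hgrad : ∀ y, ‖gradient ρ y‖ ≤ K)
    (i j : Fin d) (y : Euc d) :
    |pd i (fun y => √(ρ y)) y * pd j (fun y => √(ρ y)) y| ≤ K ^ 2 / (4 * ρmin) := by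
  have hpos : 0 < ρ y := hρmin.trans_le (hlow y)
  have hD := ((hρ.differentiable two_ne_zero y).hasFDerivAt).sqrt hpos.ne'
  have hi : ∀ i, pd i (fun y => √(ρ y)) y = 1 / (2 * √(ρ y)) * pd i ρ y := fun i => by
    rw [pd, hD.fderiv]; rfl
  have h1 : pd i (fun y => √(ρ y)) y * pd j (fun y => √(ρ y)) y
      = pd i ρ y * pd j ρ y / (4 * ρ y) := by
    rw [hi, hi]
    have h0 : √(ρ y) ≠ 0 := (Real.sqrt_pos.2 hpos).ne'
    have h4 : 4 * ρ y = (2 * √(ρ y)) * (2 * √(ρ y)) := by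
      nlinarith [Real.mul_self_sqrt hpos.le]
    rw [h4]
    field_simp
  have hp : ∀ i, |pd i ρ y| ≤ K := fun i => (abs_pd_le ρ y i).trans (hgrad y)
  rw [h1, abs_div, abs_mul, abs_of_pos (by positivity : 0 < 4 * ρ y), sq]
  have hK : 0 ≤ K := (abs_nonneg _).trans (hp i)
  have := hlow y
  gcongr
  · exact hp i
  · exact hp j

/-- Averaging the stress against a kernel `φ` costs one derivative of `φ` for the Laplacian
part, since only `∇ρ` is controlled, and none for the part quadratic in `∇√ρ`. -/
lemma abs_average_qStress_le {d : ℕ} {φ ρ : Euc d → ℝ} (hφ : ContDiff ℝ 1 φ)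
    (hc : HasCompactSupport φ) (hρ : ContDiff ℝ 2 ρ) {ρmin K : ℝ}
    (hρmin : 0 < ρmin) (hlow : ∀ y, ρmin ≤ ρ y) (hgrad : ∀ y, ‖gradient ρ y‖ ≤ K)
    (hb m : ℝ) (i j : Fin d) (x : Euc d) :
    |∫ r, φ r * qStress hb m ρ (x + r) i j| ≤
      hb ^ 2 / (4 * m ^ 2) * ∑ k, K * (∫ r, |pd k φ r|)
        + hb ^ 2 / m ^ 2 * (K ^ 2 / (4 * ρmin) * ∫ r, |φ r|) := by
  set s : Euc d → ℝ := fun y => √(ρ y) with hs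
  have hsC : ContDiff ℝ 2 s := hρ.sqrt fun y => (hρmin.trans_le (hlow y)).ne'
  have hsc : ∀ i, Continuous (pd i s) := fun i =>
    (contDiff_pd (n := 1) hsC (by norm_num) i).continuous
  have hρ1 : ∀ k, ContDiff ℝ 1 (pd k ρ) := fun k => contDiff_pd hρ (by norm_num) k
  have hρ2 : ∀ k, Continuous (pd k (pd k ρ)) := fun k =>
    (contDiff_pd (n := 0) (hρ1 k) (by simp) k).continuous
  have hL : ∀ k, Integrable fun r => φ r * pd k (pd k ρ) (x + r) := fun k =>
    integrable_kernel_mul hφ.continuous hc (hρ2 k) x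
  have hQ : Integrable fun r => φ r * (pd i s (x + r) * pd j s (x + r)) :=
    integrable_kernel_mul hφ.continuous hc ((hsc i).mul (hsc j)) x
  have hlap : ∫ r, φ r * lap ρ (x + r) = -∑ k, ∫ r, pd k φ r * pd k ρ (x + r) := by
    simp only [lap, Finset.mul_sum]
    rw [integral_finsetSum _ fun k _ => hL k, ← Finset.sum_neg_distrib]
    exact Finset.sum_congr rfl fun k _ => average_pd hφ hc (hρ1 k) k x
  have hLi : Integrable fun r => φ r * lap ρ (x + r) := by
    simp only [lap, Finset.mul_sum]
    exact integrable_finsetSum _ fun k _ => hL k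
  have hsplit : ∫ r, φ r * qStress hb m ρ (x + r) i j
      = hb ^ 2 / (4 * m ^ 2) * (if i = j then (1 : ℝ) else 0) * (∫ r, φ r * lap ρ (x + r))
        - hb ^ 2 / m ^ 2 * ∫ r, φ r * (pd i s (x + r) * pd j s (x + r)) := by
    rw [← integral_const_mul, ← integral_const_mul,
      ← integral_sub (hLi.const_mul _) (hQ.const_mul _)]
    congr 1
    funext r
    simp only [qStress, Matrix.of_apply, gradient_coord, ← hs]
    ring
  have hlap_le : |∫ r, φ r * lap ρ (x + r)| ≤ ∑ k, K * ∫ r, |pd k φ r| := by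
    rw [hlap, abs_neg]
    refine (Finset.abs_sum_le_sum_abs _ _).trans (Finset.sum_le_sum fun k _ => ?_)
    exact abs_average_le (contDiff_pd (n := 0) hφ (by simp) k).continuous
      (hasCompactSupport_pd hc k) (fun y => (abs_pd_le ρ y k).trans (hgrad y)) x
  have hδ : |if i = j then (1 : ℝ) else 0| ≤ 1 := by split_ifs <;> simp
  rw [hsplit]
  refine (abs_sub _ _).trans ?_
  rw [abs_mul, abs_mul, abs_mul, abs_of_nonneg (by positivity : 0 ≤ hb ^ 2 / (4 * m ^ 2)),
    abs_of_nonneg (by positivity : 0 ≤ hb ^ 2 / m ^ 2)]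
  gcongr
  · exact mul_le_of_le_one_right (by positivity) hδ
  · exact abs_average_le (a := fun y => pd i s y * pd j s y) hφ.continuous hc
      (abs_gradient_sqrt_mul_le hρ hρmin hlow hgrad i j) x

/-- Estimate of `∇·Σ̄_ℓ` by terms of order `ℓ⁻²` and `ℓ⁻¹`, with constants the `L¹` norms of the first
and second derivatives of the mollifier. -/
lemma norm_divCgStress_le {d : ℕ} {G ρ : Euc d → ℝ} (hG : IsMollifier G)
    (hρ : ContDiff ℝ 2 ρ) {ρmin K : ℝ}
    (hρmin : 0 < ρmin) (hlow : ∀ y, ρmin ≤ ρ y) (hgrad : ∀ y, ‖gradient ρ y‖ ≤ K)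
    (hb m : ℝ) {ℓ : ℝ} (hℓ : 0 < ℓ) (x : Euc d) :
    ‖divCgStress G ℓ hb m ρ x‖ ≤
      d * ∑ i, (hb ^ 2 / (4 * m ^ 2) * ∑ k, K * (ℓ⁻¹ * (ℓ⁻¹ * ∫ r, |pd k (pd i G) r|))
        + hb ^ 2 / m ^ 2 * (K ^ 2 / (4 * ρmin) * (ℓ⁻¹ * ∫ r, |pd i G r|))) := by
  have hGc : HasCompactSupport G :=
    HasCompactSupport.of_support_subset_isCompact (isCompact_closedBall (0 : Euc d) 1)
      ((subset_tsupport G).trans (hG.supp.trans ball_subset_closedBall))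
  have hG3 : ContDiff ℝ 3 G := hG.smooth.of_le (by norm_cast)
  have hG2 : ∀ i, ContDiff ℝ 2 (pd i G) := fun i => contDiff_pd hG3 (by norm_num) i
  have hR3 : ContDiff ℝ 3 (resc G ℓ) := contDiff_resc hG3 ℓ
  have hRc : HasCompactSupport (resc G ℓ) := hasCompactSupport_resc hGc hℓ
  have hR1 : ∀ i, ContDiff ℝ 1 (pd i (resc G ℓ)) := fun i =>
    contDiff_pd hR3 (by norm_num) i
  have hn1 : ∀ i, ∫ r, |pd i (resc G ℓ) r| = ℓ⁻¹ * ∫ r, |pd i G r| := fun i => by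
    rw [pd_resc (hG3.differentiable three_ne_zero) ℓ i]
    simp only [abs_mul, abs_of_pos (inv_pos.2 hℓ)]
    rw [integral_const_mul, integral_abs_resc _ hℓ]
  have hn2 : ∀ k i, ∫ r, |pd k (pd i (resc G ℓ)) r|
      = ℓ⁻¹ * (ℓ⁻¹ * ∫ r, |pd k (pd i G) r|) := fun k i => by
    have h1 : ∀ r, pd k (pd i (resc G ℓ)) r = ℓ⁻¹ * (ℓ⁻¹ * resc (pd k (pd i G)) ℓ r) := by
      intro r
      have hd : DifferentiableAt ℝ (resc (pd i G) ℓ) r :=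
        (contDiff_resc (hG2 i) ℓ).differentiable two_ne_zero r
      have h2 := congrFun (pd_resc ((hG2 i).differentiable two_ne_zero) ℓ k) r
      rw [pd_resc (hG3.differentiable three_ne_zero) ℓ i, ← h2, pd, pd,
        (hd.hasFDerivAt.const_mul ℓ⁻¹).fderiv]
      rfl
    simp only [h1, abs_mul, abs_of_pos (inv_pos.2 hℓ)]
    rw [integral_const_mul, integral_const_mul, integral_abs_resc _ hℓ]
  have hcont : ∀ i j, Continuous fun z => qStress hb m ρ z i j := by
    intro i j
    have hsC : ContDiff ℝ 2 (fun y => √(ρ y)) :=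
      hρ.sqrt fun y => (hρmin.trans_le (hlow y)).ne'
    have hsc : ∀ i, Continuous (pd i fun y => √(ρ y)) := fun i =>
      (contDiff_pd (n := 1) hsC (by norm_num) i).continuous
    have hρ2 : ∀ k, Continuous (pd k (pd k ρ)) := fun k =>
      (contDiff_pd (n := 0) (contDiff_pd (n := 1) hρ (by norm_num) k) (by simp) k).continuous
    have hl : Continuous (lap ρ) := continuous_finsetSum _ fun k _ => hρ2 k
    simp only [qStress, Matrix.of_apply, gradient_coord]
    exact ((continuous_const.mul hl).mul continuous_const).sub
      (continuous_const.mul ((hsc i).mul (hsc j)))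
  have hentry : ∀ i j, |pd i (fun y => cgStress G ℓ hb m ρ y i j) x| ≤
      hb ^ 2 / (4 * m ^ 2) * ∑ k, K * (ℓ⁻¹ * (ℓ⁻¹ * ∫ r, |pd k (pd i G) r|))
        + hb ^ 2 / m ^ 2 * (K ^ 2 / (4 * ρmin) * (ℓ⁻¹ * ∫ r, |pd i G r|)) := by
    intro i j
    have h1 := pd_average (hR3.of_le (by norm_num)) hRc (hcont i j) i x
    have h2 := abs_average_qStress_le (hR1 i) (hasCompactSupport_pd hRc i) hρ hρmin hlow hgrad
      hb m i j x
    simp only [hn1, hn2] at h2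
    simp only [cgStress, cg, Matrix.of_apply, smul_eq_mul]
    rw [h1, abs_neg]
    exact h2
  have hsum : ‖divCgStress G ℓ hb m ρ x‖ ≤ ∑ j, |divCgStress G ℓ hb m ρ x j| := by
    conv_lhs => rw [← (EuclideanSpace.basisFun (Fin d) ℝ).sum_repr (divCgStress G ℓ hb m ρ x)]
    refine (norm_sum_le _ _).trans (Finset.sum_le_sum fun j _ => ?_)
    simp [norm_smul]
  have hj : ∀ j ∈ Finset.univ, |divCgStress G ℓ hb m ρ x j| ≤ _ := fun j _ =>
    (Finset.abs_sum_le_sum_abs (fun i => pd i (fun y => cgStress G ℓ hb m ρ y i j) x)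
      Finset.univ).trans (Finset.sum_le_sum fun i _ => hentry i j)
  have hcard := Finset.sum_le_card_nsmul _ _ _ hj
  rw [Finset.card_univ, Fintype.card_fin, nsmul_eq_mul] at hcard
  exact hsum.trans hcard

/-! ### The density-velocity cumulant -/

/-- The boundedness of `a` guarantees that the real supremum defining `supIncr` is a genuine one. -/
lemma norm_incr_le_supIncr {d : ℕ} {E : Type*} [NormedAddCommGroup E] {a : Euc d → E} {S : ℝ}
    (ha : ∀ y, ‖a y‖ ≤ S) {ℓ : ℝ} {r : Euc d} (hr : r ∈ ball (0 : Euc d) ℓ) (x : Euc d) :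
    ‖a (x + r) - a x‖ ≤ supIncr a ℓ x := by
  have h2 : ∀ r, ‖incr a r x‖ ≤ 2 * S := fun r =>
    (norm_sub_le _ _).trans (by linarith [ha (x + r), ha x])
  have hS : 0 ≤ 2 * S := (norm_nonneg _).trans (h2 0)
  have hb : BddAbove (Set.range fun r => ⨆ _ : r ∈ ball (0 : Euc d) ℓ, ‖incr a r x‖) := by
    refine ⟨2 * S, ?_⟩
    rintro _ ⟨r, rfl⟩
    exact Real.iSup_le (fun _ => h2 r) hS
  refine le_ciSup_of_le hb r ?_
  have : Nonempty (r ∈ ball (0 : Euc d) ℓ) := ⟨hr⟩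
  rw [ciSup_const]
  rfl

/-- The cumulant is quadratic in the increments:
`τ̄(ρ, v) = ∫ G_ℓ δρ δv - (∫ G_ℓ δρ) (∫ G_ℓ δv)`. -/
lemma norm_tauV_le {d : ℕ} {G ρ : Euc d → ℝ} (hG : IsMollifier G) {v : Euc d → Euc d}
    (hρ : Continuous ρ) (hv : Measurable v) {ℓ : ℝ} (hℓ : 0 < ℓ) {a b : ℝ} (x : Euc d)
    (hδρ : ∀ r ∈ ball (0 : Euc d) ℓ, ‖ρ (x + r) - ρ x‖ ≤ a)
    (hδv : ∀ r ∈ ball (0 : Euc d) ℓ, ‖v (x + r) - v x‖ ≤ b) :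
    ‖tauV G ℓ ρ v x‖ ≤ 2 * (a * b) := by
  have hGc : HasCompactSupport G :=
    HasCompactSupport.of_support_subset_isCompact (isCompact_closedBall (0 : Euc d) 1)
      ((subset_tsupport G).trans (hG.supp.trans ball_subset_closedBall))
  set w := resc G ℓ with hw
  have hwc : Continuous w := (contDiff_resc hG.smooth ℓ).continuous
  have hwi : Integrable w := hwc.integrable_of_hasCompactSupport (hasCompactSupport_resc hGc hℓ)
  have hw0 : ∀ r, 0 ≤ w r := fun r => mul_nonneg (by positivity) (hG.nonneg _)
  have hw1 : ∫ r, w r = 1 := integral_resc hG hℓ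
  have hwz : ∀ r, r ∉ ball (0 : Euc d) ℓ → w r = 0 := by
    intro r hr
    have : G (ℓ⁻¹ • r) = 0 := by
      by_contra hne
      have hm := hG.supp (subset_tsupport G hne)
      rw [mem_ball_zero_iff, norm_smul, norm_inv, Real.norm_of_nonneg hℓ.le,
        inv_mul_lt_iff₀ hℓ, mul_one] at hm
      exact hr (mem_ball_zero_iff.2 hm)
    simp [hw, resc, this]
  have ha : 0 ≤ a := (norm_nonneg _).trans (hδρ 0 (mem_ball_self hℓ))
  have hb : 0 ≤ b := (norm_nonneg _).trans (hδv 0 (mem_ball_self hℓ))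
  -- Estimates on the ball suffice, since the kernel vanishes outside it.
  have hbound : ∀ {E : Type} [NormedAddCommGroup E] [NormedSpace ℝ E] (F : Euc d → E) (c : ℝ),
      (∀ r ∈ ball (0 : Euc d) ℓ, ‖F r‖ ≤ c) → ∀ r, ‖w r • F r‖ ≤ w r * c := by
    intro E _ _ F c hF r
    rw [norm_smul, Real.norm_of_nonneg (hw0 r)]
    by_cases hr : r ∈ ball (0 : Euc d) ℓ
    · exact mul_le_mul_of_nonneg_left (hF r hr) (hw0 r)
    · simp [hwz r hr]
  have hint : ∀ {E : Type} [NormedAddCommGroup E] [NormedSpace ℝ E] (F : Euc d → E) (c : ℝ),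
      AEStronglyMeasurable F → (∀ r ∈ ball (0 : Euc d) ℓ, ‖F r‖ ≤ c) →
      Integrable fun r => w r • F r := by
    intro E _ _ F c hFm hF
    exact (hwi.mul_const c).mono' (hwc.aestronglyMeasurable.smul hFm)
      (.of_forall (hbound F c hF))
  have hle : ∀ {E : Type} [NormedAddCommGroup E] [NormedSpace ℝ E] (F : Euc d → E) (c : ℝ),
      (∀ r ∈ ball (0 : Euc d) ℓ, ‖F r‖ ≤ c) → ‖∫ r, w r • F r‖ ≤ c := by
    intro E _ _ F c hF
    have := norm_integral_le_of_norm_le (hwi.mul_const c) (.of_forall (hbound F c hF))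
    rwa [integral_mul_const, hw1, one_mul] at this
  set f : Euc d → ℝ := fun r => ρ (x + r) - ρ x with hf
  set g : Euc d → Euc d := fun r => v (x + r) - v x with hg
  have hfm : AEStronglyMeasurable f volume :=
    ((hρ.comp (continuous_const.add continuous_id)).sub continuous_const).aestronglyMeasurable
  have hgm : AEStronglyMeasurable g volume :=
    ((hv.comp (measurable_const_add x)).sub_const (v x)).aestronglyMeasurable
  have hfg : ∀ r ∈ ball (0 : Euc d) ℓ, ‖f r • g r‖ ≤ a * b := fun r hr => by
    rw [norm_smul]
    exact mul_le_mul (hδρ r hr) (hδv r hr) (norm_nonneg _) ha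
  have iF := hint f a hfm hδρ
  have ig := hint g b hgm hδv
  have ifg := hint (fun r => f r • g r) (a * b) (hfm.smul hgm) hfg
  have e1 : cg G ℓ ρ x = (∫ r, w r • f r) + ρ x := by
    have : ∀ r, w r • ρ (x + r) = w r • f r + w r * ρ x := fun r => by
      simp only [hf, smul_eq_mul]; ring
    rw [cg, ← hw]
    simp only [this]
    rw [integral_add iF (hwi.mul_const _), integral_mul_const, hw1, one_mul]
  have e2 : cg G ℓ v x = (∫ r, w r • g r) + v x := by
    have : ∀ r, w r • v (x + r) = w r • g r + w r • v x := fun r => by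
      simp only [hg]; module
    rw [cg, ← hw]
    simp only [this]
    rw [integral_add ig (hwi.smul_const _), integral_smul_const, hw1, one_smul]
  have e3 : cg G ℓ (fun y => ρ y • v y) x = (∫ r, w r • f r • g r)
      + (∫ r, w r • f r) • v x + ρ x • (∫ r, w r • g r) + ρ x • v x := by
    have : ∀ r, w r • ρ (x + r) • v (x + r) = w r • f r • g r + (w r • f r) • v x
        + ρ x • (w r • g r) + w r • (ρ x • v x) := fun r => by
      simp only [hf, hg, smul_eq_mul]; module
    rw [cg, ← hw]
    simp only [this]
    have j1 : Integrable fun r => (w r • f r) • v x := iF.smul_const _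
    have j2 : Integrable fun r => ρ x • (w r • g r) := ig.smul (ρ x)
    have j3 : Integrable fun r => w r • f r • g r + (w r • f r) • v x := ifg.add j1
    have j4 : Integrable fun r => w r • f r • g r + (w r • f r) • v x + ρ x • (w r • g r) :=
      j3.add j2
    rw [integral_add j4 (hwi.smul_const _), integral_add j3 j2, integral_add ifg j1, integral_smul_const, integral_smul_const,
      integral_smul, hw1, one_smul]
  have e4 : tauV G ℓ ρ v x
      = (∫ r, w r • f r • g r) - (∫ r, w r • f r) • (∫ r, w r • g r) := by
    rw [tauV, e1, e2, e3]; module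
  rw [e4]
  refine (norm_sub_le _ _).trans ?_
  rw [norm_smul]
  have h1 := hle (fun r => f r • g r) (a * b) hfg
  have h2 := mul_le_mul (hle f a hδρ) (hle g b hδv) (norm_nonneg _) ha
  linarith

end QT

open QT in
/-- quantum baropycnal work bound `|Λ^{(Σ)}_ℓ(x)| ≤ C ℓ^{h−1}` for
`ℓ ∈ (0,ℓ₀]`, with `C` depending only on `G, d, ħ, m, R, A, B, M, K, ρ_min, h, ℓ₀`. -/
theorem qBaroWork_le {d : ℕ} (hd : 1 ≤ d)
    (G : Euc d → ℝ) (hG : IsMollifier G)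
    (hb m R A B M K ρmin h ℓ₀ : ℝ) (hhb : 0 < hb) (hm : 0 < m) (hR : 0 < R)
    (hA : 0 < A) (hB : 0 < B) (hM : 0 < M) (hK : 0 < K) (hρmin : 0 < ρmin)
    (hh : h ∈ Set.Ioc (0 : ℝ) 1) (hℓ₀ : 0 < ℓ₀) :
    ∃ C > 0, ∀ (ρ : Euc d → ℝ) (v : Euc d → Euc d) (Cv : ℝ) (x : Euc d),
      ContDiff ℝ 2 ρ → (∀ y, ρmin ≤ ρ y) → (∀ y, ρ y ≤ R) →
      (∀ y, ‖gradient ρ y‖ ≤ K) →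
      Measurable v → (∀ y, ‖v y‖ ≤ Cv) →
      (∀ ℓ ∈ Set.Ioc (0 : ℝ) ℓ₀,
        supIncr v ℓ x ≤ A * ℓ ^ h ∧ supIncr ρ ℓ x ≤ B * ℓ ∧ 1 / M ≤ cg G ℓ ρ x) →
      ∀ ℓ ∈ Set.Ioc (0 : ℝ) ℓ₀,
        |qBaroWork G ℓ hb m ρ v x| ≤ C * ℓ ^ (h - 1) := by
  set n1 : ℝ := ∑ i, ∫ r, |pd i G r| with hn1
  set n2 : ℝ := ∑ i, ∑ k, ∫ r, |pd k (pd i G) r| with hn2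
  have hn1' : 0 ≤ n1 := Finset.sum_nonneg fun i _ => integral_nonneg fun r => abs_nonneg _
  have hn2' : 0 ≤ n2 := Finset.sum_nonneg fun i _ => Finset.sum_nonneg fun k _ =>
    integral_nonneg fun r => abs_nonneg _
  set Q : ℝ := d * (hb ^ 2 / (4 * m ^ 2) * K * n2
    + hb ^ 2 / m ^ 2 * (K ^ 2 / (4 * ρmin)) * n1 * ℓ₀) with hQ
  have hQ0 : 0 ≤ Q := by positivity
  refine ⟨M * Q * (2 * (B * A)) + 1, by positivity, ?_⟩
  intro ρ v Cv x hρ hlow hup hgrad hv hvC hsup ℓ hℓ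
  have hℓ0 : 0 < ℓ := hℓ.1
  obtain ⟨hsv, hsρ, hcg⟩ := hsup ℓ hℓ
  have hρS : ∀ y, ‖ρ y‖ ≤ R := fun y => by
    rw [Real.norm_of_nonneg (hρmin.le.trans (hlow y))]; exact hup y
  have hτ : ‖tauV G ℓ ρ v x‖ ≤ 2 * (B * ℓ * (A * ℓ ^ h)) :=
    norm_tauV_le hG hρ.continuous hv hℓ0 x
      (fun r hr => (norm_incr_le_supIncr hρS hr x).trans hsρ)
      (fun r hr => (norm_incr_le_supIncr hvC hr x).trans hsv)
  have hdiv : ‖divCgStress G ℓ hb m ρ x‖ ≤ Q * (ℓ⁻¹ * ℓ⁻¹) := by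
    refine (norm_divCgStress_le hG hρ hρmin hlow hgrad hb m hℓ0 x).trans ?_
    have heq : ∑ i, (hb ^ 2 / (4 * m ^ 2) * ∑ k, K * (ℓ⁻¹ * (ℓ⁻¹ * ∫ r, |pd k (pd i G) r|))
        + hb ^ 2 / m ^ 2 * (K ^ 2 / (4 * ρmin) * (ℓ⁻¹ * ∫ r, |pd i G r|)))
        = hb ^ 2 / (4 * m ^ 2) * K * n2 * (ℓ⁻¹ * ℓ⁻¹)
          + hb ^ 2 / m ^ 2 * (K ^ 2 / (4 * ρmin)) * n1 * ℓ⁻¹ := by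
      rw [Finset.sum_add_distrib]
      simp only [← Finset.mul_sum, hn1, hn2]
      ring
    -- The part quadratic in `∇√ρ` is only of order `ℓ⁻¹`, and `ℓ⁻¹ ≤ ℓ₀ ℓ⁻²`.
    have hinv : ℓ⁻¹ ≤ ℓ₀ * (ℓ⁻¹ * ℓ⁻¹) := by
      rw [← mul_assoc]
      refine le_mul_of_one_le_left (inv_nonneg.2 hℓ0.le) ?_
      rw [← div_eq_mul_inv, one_le_div hℓ0]
      exact hℓ.2
    have hq : 0 ≤ hb ^ 2 / m ^ 2 * (K ^ 2 / (4 * ρmin)) * n1 := by positivity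
    rw [heq, hQ, mul_assoc (d : ℝ)]
    refine mul_le_mul_of_nonneg_left ?_ (Nat.cast_nonneg d)
    nlinarith [mul_le_mul_of_nonneg_left hinv hq]
  have hcg0 : 0 < cg G ℓ ρ x := (one_div_pos.2 hM).trans_le hcg
  have hcgi : (cg G ℓ ρ x)⁻¹ ≤ M := by
    rw [one_div] at hcg
    exact inv_le_of_inv_le₀ hM hcg
  have hpow : 0 < ℓ ^ (h - 1) := Real.rpow_pos_of_pos hℓ0 _
  have hpow' : ℓ ^ h = ℓ ^ (h - 1) * ℓ := by
    rw [Real.rpow_sub_one hℓ0.ne', div_mul_cancel₀ _ hℓ0.ne']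
  calc |qBaroWork G ℓ hb m ρ v x|
      = (cg G ℓ ρ x)⁻¹ * |⟪divCgStress G ℓ hb m ρ x, tauV G ℓ ρ v x⟫| := by
        rw [qBaroWork, abs_neg, abs_mul, abs_of_pos (inv_pos.2 hcg0)]
    _ ≤ M * ((Q * (ℓ⁻¹ * ℓ⁻¹)) * (2 * (B * ℓ * (A * ℓ ^ h)))) := by
        refine mul_le_mul hcgi ((abs_real_inner_le_norm _ _).trans ?_) (abs_nonneg _) hM.le
        exact mul_le_mul hdiv hτ (norm_nonneg _) (by positivity)
    _ = M * Q * (2 * (B * A)) * ℓ ^ (h - 1) := by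
        rw [hpow']; field_simp
    _ ≤ (M * Q * (2 * (B * A)) + 1) * ℓ ^ (h - 1) := by nlinarith
end
end

section
/- Let 𝓛 > 0, let ρ : ℝ^d → ℝ be measurable 𝓛-periodic with 0 ≤ ρ ≤ R, and let v : ℝ^d → ℝ^d be a bounded measurable 𝓛-periodic vector field. Let p ∈ [3,∞), σ ∈ (0,1], ℓ > 0, and constants A, L, M > 0, and suppose that ‖δv(r;·)‖_p ≤ A (|r|/L)^σ for all |r| ≤ ℓ and that ρ̄_ℓ(x) ≥ 1/M for almost every x. Then there exists a constant C, depending only on G, d, R and M, such that the deformation work satisfies ‖Π_ℓ‖_{p/3} ≤ C A³ ℓ^{−1} (ℓ/L)^{3σ}. -/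
/-!
The deformation work is bounded pointwise by the cube of a local mean of velocity increments, and
the bound is then integrated over the box.

Fix `x` with `ρ̄_ℓ(x) ≥ 1/M`. Subtracting the constant `v(x)` from `v` changes neither `∇ṽ_ℓ` nor
`τ̃_ℓ` at `x`, so both can be written with the centred moments
`N_j = cg (ρ (v_j - v_j(x)))` and `N_ij = cg (ρ (v_i - v_i(x)) (v_j - v_j(x)))`:
`ṽ_j = v_j(x) + N_j / ρ̄` near `x`, and `τ̃_ij = N_ij / ρ̄ - N_i N_j / ρ̄²` at `x`. Let `S(x)` be the
`L^p` mean of `s ↦ δv(ℓ s; x)` over the unit ball with its uniform *probability* measure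
(`incrMean`). As `L^q` means over a probability space increase in `q` and `p ≥ 3`,
`N_j = O(S)`, `∂_i N_j = O(ℓ⁻¹ S)` and `N_ij = O(S²)`, with constants that do not involve `p`
(`abs_cg_le`, `abs_deriv_cg_le`, `integral_norm_incr_le`). Derivatives fall on the kernel
(`hasFDerivAt_cg`), so no regularity of `ρ` or `v` is used. Hence `|Π_ℓ(x)| ≤ C ℓ⁻¹ S(x)³`
(`abs_deformWork_le`).

Consequently `‖Π_ℓ‖_{p/3} ≤ C ℓ⁻¹ ‖S‖_p³`, and by Tonelli `‖S‖_p^p` is the average over `|s| < 1` of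
`‖δv(ℓ s; ·)‖_p^p`, each of which is at most `(A (ℓ/L)^σ)^p` (`lintegral_incrMean_rpow_le`).
-/

open MeasureTheory Metric
open scoped RealInnerProductSpace ENNReal

noncomputable section

namespace QT

/-! ### Mollifiers and averages over the unit ball -/

theorem IsMollifier.hasCompactSupport {G : Euc d → ℝ} (hG : IsMollifier G) :
    HasCompactSupport G :=
  (isCompact_closedBall (0 : Euc d) 1).of_isClosed_subset (isClosed_tsupport G)
    (hG.supp.trans ball_subset_closedBall)

theorem IsMollifier.eq_zero {G : Euc d → ℝ} (hG : IsMollifier G) {s : Euc d}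
    (hs : s ∉ ball (0 : Euc d) 1) : G s = 0 :=
  image_eq_zero_of_notMem_tsupport fun h => hs (hG.supp h)

theorem IsMollifier.fderiv_eq_zero {G : Euc d → ℝ} (hG : IsMollifier G) {s : Euc d}
    (hs : s ∉ ball (0 : Euc d) 1) : fderiv ℝ G s = 0 := by
  by_contra h
  exact hs (hG.supp (support_fderiv_subset ℝ h))

/-- A single constant bounds the mollifier and all of its partial derivatives. -/
theorem IsMollifier.exists_bound {G : Euc d → ℝ} (hG : IsMollifier G) :
    ∃ K, 0 ≤ K ∧ (∀ s, |G s| ≤ K) ∧ ∀ i s, |fderiv ℝ G s (e d i)| ≤ K := by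
  obtain ⟨K₁, h₁⟩ := hG.hasCompactSupport.exists_bound_of_continuous hG.smooth.continuous
  obtain ⟨K₂, h₂⟩ := (hG.hasCompactSupport.fderiv ℝ).exists_bound_of_continuous
    (hG.smooth.continuous_fderiv (by simp))
  refine ⟨max K₁ K₂, le_max_of_le_left ((norm_nonneg _).trans (h₁ 0)),
    fun s => (h₁ s).trans (le_max_left _ _), fun i s => ?_⟩
  have he : ‖e d i‖ = 1 := by simp [e]
  calc |fderiv ℝ G s (e d i)| ≤ ‖fderiv ℝ G s‖ * ‖e d i‖ := (fderiv ℝ G s).le_opNorm _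
    _ ≤ max K₁ K₂ := by rw [he, mul_one]; exact (h₂ s).trans (le_max_right _ _)

/-- The uniform probability measure on the open unit ball. -/
def ballMeas (d : ℕ) : Measure (Euc d) :=
  (volume (ball (0 : Euc d) 1))⁻¹ • volume.restrict (ball (0 : Euc d) 1)

/-- The volume of the unit ball. -/
def ballVol (d : ℕ) : ℝ := (volume (ball (0 : Euc d) 1)).toReal

theorem volume_ball_ne_zero : volume (ball (0 : Euc d) 1) ≠ 0 :=
  (measure_ball_pos _ _ one_pos).ne'

theorem ballVol_pos : 0 < ballVol d :=
  ENNReal.toReal_pos volume_ball_ne_zero measure_ball_lt_top.ne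

instance : IsProbabilityMeasure (ballMeas d) :=
  ⟨by simp [ballMeas, ENNReal.inv_mul_cancel volume_ball_ne_zero measure_ball_lt_top.ne]⟩

theorem ballMeas_ae_mem : ∀ᵐ s ∂ballMeas d, s ∈ ball (0 : Euc d) 1 :=
  Measure.ae_smul_measure (ae_restrict_mem measurableSet_ball) _

/-- A bounded weight living on the unit ball is dominated by a multiple of `ballMeas`. -/
theorem abs_integral_weight_le {w φ b : Euc d → ℝ} {K : ℝ} (hw : ∀ s, |w s| ≤ K)
    (hw0 : ∀ s ∉ ball (0 : Euc d) 1, w s = 0) (hφ : ∀ s, |φ s| ≤ b s)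
    (hb : Integrable b (ballMeas d)) :
    |∫ s, w s * φ s| ≤ K * ballVol d * ∫ s, b s ∂ballMeas d := by
  have hV : (volume (ball (0 : Euc d) 1)).toReal ≠ 0 := ballVol_pos.ne'
  have hb' : IntegrableOn b (ball (0 : Euc d) 1) := by
    have := hb
    rw [ballMeas, integrable_smul_measure
      (ENNReal.inv_ne_zero.2 measure_ball_lt_top.ne)
      (ENNReal.inv_ne_top.2 volume_ball_ne_zero)] at this
    exact this
  have hint : K * ballVol d * ∫ s, b s ∂ballMeas d = ∫ s in ball (0 : Euc d) 1, K * b s := by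
    rw [ballMeas, integral_smul_measure, integral_const_mul, ballVol, ENNReal.toReal_inv,
      smul_eq_mul]
    field_simp
  rw [hint]
  calc |∫ s, w s * φ s| ≤ ∫ s, |w s * φ s| := abs_integral_le_integral_abs
    _ = ∫ s in ball (0 : Euc d) 1, |w s * φ s| :=
      (setIntegral_eq_integral_of_forall_compl_eq_zero fun s hs => by simp [hw0 s hs]).symm
    _ ≤ _ := by
      refine integral_mono_of_nonneg (ae_of_all _ fun s => abs_nonneg _) (hb'.const_mul K)
        (ae_of_all _ fun s => ?_)
      change |w s * φ s| ≤ K * b s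
      rw [abs_mul]
      exact mul_le_mul (hw s) (hφ s) (abs_nonneg _) ((abs_nonneg _).trans (hw s))

/-! ### Coarse-graining in the variable `s = r / ℓ` -/

/-- Change of variables `r = ℓ s` against the kernel scaling `ℓ⁻ᵈ w(r/ℓ)`. -/
theorem integral_resc_s18 {ℓ : ℝ} (hℓ : 0 < ℓ) (w : Euc d → ℝ) (F : Euc d → ℝ) :
    ∫ r, resc w ℓ r * F r = ∫ s, w s * F (ℓ • s) := by
  have h := Measure.integral_comp_smul_of_nonneg volume (fun r : Euc d => resc w ℓ r * F r) ℓ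
    (hR := hℓ.le)
  have hd : (ℓ ^ d) ≠ 0 := (pow_pos hℓ d).ne'
  simp only [resc, smul_smul, inv_mul_cancel₀ hℓ.ne', one_smul, finrank_euclideanSpace,
    Fintype.card_fin, smul_eq_mul, mul_assoc, integral_const_mul] at h
  simp only [resc, mul_assoc, integral_const_mul]
  exact (mul_left_cancel₀ (inv_ne_zero hd) h).symm

theorem cg_eq {G : Euc d → ℝ} {ℓ : ℝ} (hℓ : 0 < ℓ) (f : Euc d → ℝ) (x : Euc d) :
    cg G ℓ f x = ∫ s, G s * f (x + ℓ • s) :=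
  integral_resc_s18 hℓ G fun r => f (x + r)

theorem resc_hasCompactSupport {G : Euc d → ℝ} (hG : HasCompactSupport G) {ℓ : ℝ}
    (hℓ : 0 < ℓ) : HasCompactSupport (resc G ℓ) :=
  (hG.comp_smul (inv_ne_zero hℓ.ne')).mul_left

theorem resc_contDiff {G : Euc d → ℝ} (hG : IsMollifier G) (ℓ : ℝ) :
    ContDiff ℝ 1 (resc G ℓ) := by
  have := hG.smooth.of_le (m := 1) (by simp)
  unfold resc
  fun_prop

theorem integrable_resc_smul {G : Euc d → ℝ} (hG : IsMollifier G) {ℓ : ℝ} (hℓ : 0 < ℓ)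
    {E : Type*} [NormedAddCommGroup E] [NormedSpace ℝ E] {f : Euc d → E}
    (hf : StronglyMeasurable f) {c : ℝ} (hc : ∀ y, ‖f y‖ ≤ c) (x : Euc d) :
    Integrable fun r => resc G ℓ r • f (x + r) := by
  have h1 : Integrable (resc G ℓ) := (resc_contDiff hG ℓ).continuous.integrable_of_hasCompactSupport
    (resc_hasCompactSupport hG.hasCompactSupport hℓ)
  exact h1.smul_bdd c (hf.comp_measurable (by fun_prop)).aestronglyMeasurable
    (ae_of_all _ fun r => hc _)

/-- Coarse-grained bounded fields are differentiable, the derivative falling on the kernel. -/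
theorem hasFDerivAt_cg {G : Euc d → ℝ} (hG : IsMollifier G) {ℓ : ℝ} (hℓ : 0 < ℓ)
    {f : Euc d → ℝ} (hf : Measurable f) {c : ℝ} (hc : ∀ y, |f y| ≤ c) (x : Euc d) :
    ∃ D : Euc d →L[ℝ] ℝ, HasFDerivAt (cg G ℓ f) D x ∧
      ∀ u, D u = -(ℓ⁻¹ * ∫ s, fderiv ℝ G s u * f (x + ℓ • s)) := by
  -- `cg G ℓ f` is the convolution of `f` with the reflected kernel `g`.
  set g : Euc d → ℝ := fun t => resc G ℓ (-t) with hg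
  have hgc : HasCompactSupport g :=
    (resc_hasCompactSupport hG.hasCompactSupport hℓ).comp_homeomorph (Homeomorph.neg _)
  have hgs : ContDiff ℝ 1 g := (resc_contDiff hG ℓ).comp contDiff_neg
  have hfl : LocallyIntegrable f := by
    refine fun y => ⟨ball y 1, ball_mem_nhds _ one_pos, ?_⟩
    exact Measure.integrableOn_of_bounded (M := c) measure_ball_lt_top.ne
      hf.aestronglyMeasurable (ae_of_all _ hc)
  set Lm := ContinuousLinearMap.mul ℝ ℝ
  have hconv : cg G ℓ f = convolution f g Lm volume := by
    funext y
    rw [convolution_def, ← integral_add_left_eq_self _ y, cg]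
    refine integral_congr_ae (ae_of_all _ fun r => ?_)
    simp [hg, Lm, mul_comm]
  refine ⟨_, hconv ▸ hgc.hasFDerivAt_convolution_right Lm hfl hgs x, fun u => ?_⟩
  rw [convolution_precompR_apply Lm hfl (hgc.fderiv ℝ) (hgs.continuous_fderiv one_ne_zero),
    convolution_def, ← integral_add_left_eq_self _ x, ← integral_const_mul, ← integral_neg]
  have hder : ∀ r, fderiv ℝ g (-r) u = -(ℓ⁻¹ * resc (fun s => fderiv ℝ G s u) ℓ r) := by
    intro r
    have hG' : HasFDerivAt G (fderiv ℝ G (ℓ⁻¹ • r)) (ℓ⁻¹ • (- -r)) := by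
      rw [neg_neg]
      exact (hG.smooth.differentiable (by simp) _).hasFDerivAt
    have h2 : HasFDerivAt (fun t : Euc d => ℓ⁻¹ • (-t))
        (ℓ⁻¹ • (-ContinuousLinearMap.id ℝ (Euc d))) (-r) :=
      ((hasFDerivAt_id (𝕜 := ℝ) (-r)).neg).const_smul ℓ⁻¹
    have h3 := (hG'.comp (-r) h2).const_mul (ℓ ^ d)⁻¹
    have h4 : fderiv ℝ g (-r) = _ := h3.fderiv
    rw [h4]
    simp [resc]
    ring
  have hR := integral_resc_s18 hℓ (fun s => fderiv ℝ G s u) (fun r => -(ℓ⁻¹ * f (x + r)))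
  calc _ = ∫ r, resc (fun s => fderiv ℝ G s u) ℓ r * -(ℓ⁻¹ * f (x + r)) := by
        refine integral_congr_ae (ae_of_all _ fun r => ?_)
        have : x - (x + r) = -r := by abel
        simp only [this, hder, Lm, ContinuousLinearMap.mul_apply']
        ring
    _ = _ := by
        rw [hR]
        refine integral_congr_ae (ae_of_all _ fun r => ?_)
        ring

theorem cg_smul_apply {G : Euc d → ℝ} (hG : IsMollifier G) {ℓ : ℝ} (hℓ : 0 < ℓ)
    {ρ : Euc d → ℝ} (hρ : Measurable ρ) {R : ℝ} (hR : ∀ y, |ρ y| ≤ R)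
    {v : Euc d → Euc d} (hv : Measurable v) {c : ℝ} (hc : ∀ y, ‖v y‖ ≤ c) (x : Euc d)
    (j : Fin d) :
    cg G ℓ (fun y => ρ y • v y) x j = cg G ℓ (fun y => ρ y * v y j) x := by
  have hint := integrable_resc_smul hG hℓ (f := fun y => ρ y • v y) (c := R * c)
    (hρ.smul hv).stronglyMeasurable (fun y => by
      rw [norm_smul]
      exact mul_le_mul (hR y) (hc y) (norm_nonneg _) ((abs_nonneg _).trans (hR y))) x
  have := (EuclideanSpace.proj j : Euc d →L[ℝ] ℝ).integral_comp_comm hint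
  simpa [cg] using this.symm

/-- Kernel bound for a field dominated, along the unit ball at scale `ℓ`, by `R β`. -/
theorem abs_cg_le {G : Euc d → ℝ} (hG : IsMollifier G) {K : ℝ} (hK : 0 ≤ K)
    (hK₁ : ∀ s, |G s| ≤ K) {ℓ : ℝ} (hℓ : 0 < ℓ) {f β : Euc d → ℝ} {x : Euc d} {R t : ℝ}
    (hR : 0 ≤ R) (hf : ∀ s, |f (x + ℓ • s)| ≤ R * β s) (hβ : Integrable β (ballMeas d))
    (ht : ∫ s, β s ∂ballMeas d ≤ t) :
    |cg G ℓ f x| ≤ K * ballVol d * R * t := by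
  rw [cg_eq hℓ]
  refine (abs_integral_weight_le hK₁ (fun s hs => hG.eq_zero hs) hf (hβ.const_mul R)).trans ?_
  rw [integral_const_mul, ← mul_assoc]
  have := (ballVol_pos (d := d)).le
  gcongr

/-- The same kernel bound for the derivative, at the cost of a factor `ℓ⁻¹`. -/
theorem abs_deriv_cg_le {G : Euc d → ℝ} (hG : IsMollifier G) {K : ℝ} (hK : 0 ≤ K)
    (hK₂ : ∀ i s, |fderiv ℝ G s (e d i)| ≤ K) {ℓ : ℝ} (hℓ : 0 < ℓ) {f β : Euc d → ℝ}
    (hfm : Measurable f) {c : ℝ} (hc : ∀ y, |f y| ≤ c) {x : Euc d} {R t : ℝ}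
    (hR : 0 ≤ R) (hf : ∀ s, |f (x + ℓ • s)| ≤ R * β s) (hβ : Integrable β (ballMeas d))
    (ht : ∫ s, β s ∂ballMeas d ≤ t) :
    ∃ D : Euc d →L[ℝ] ℝ, HasFDerivAt (cg G ℓ f) D x ∧
      ∀ i, |D (e d i)| ≤ ℓ⁻¹ * (K * ballVol d * R * t) := by
  obtain ⟨D, hD, hDu⟩ := hasFDerivAt_cg hG hℓ hfm hc x
  refine ⟨D, hD, fun i => ?_⟩
  rw [hDu, abs_neg, abs_mul, abs_of_pos (inv_pos.2 hℓ)]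
  refine mul_le_mul_of_nonneg_left ?_ (inv_pos.2 hℓ).le
  refine (abs_integral_weight_le (hK₂ i) (fun s hs => by rw [hG.fderiv_eq_zero hs]; rfl) hf
    (hβ.const_mul R)).trans ?_
  rw [integral_const_mul, ← mul_assoc]
  have := (ballVol_pos (d := d)).le
  gcongr

/-! ### Pointwise bound of the deformation work -/

/-- The `Lᵖ` mean over the unit ball `|s| < 1` of the increments `δv(ℓ s; x)`. -/
def incrMean (v : Euc d → Euc d) (ℓ p : ℝ) (x : Euc d) : ℝ≥0∞ :=
  eLpNorm (fun s => incr v (ℓ • s) x) (ENNReal.ofReal p) (ballMeas d)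

theorem norm_incr_le {v : Euc d → Euc d} {c : ℝ} (hc : ∀ y, ‖v y‖ ≤ c) (r x : Euc d) :
    ‖incr v r x‖ ≤ c + c :=
  (norm_sub_le _ _).trans (add_le_add (hc _) (hc _))

theorem measurable_incr {v : Euc d → Euc d} (hv : Measurable v) (ℓ : ℝ) (x : Euc d) :
    Measurable fun s => incr v (ℓ • s) x := by
  unfold incr
  fun_prop

/-- Monotonicity of `Lᵖ` means over a probability space: the first and second moments of the
increments are at most the corresponding powers of the `p`-th mean, which is finite. -/
theorem integral_norm_incr_le {v : Euc d → Euc d} (hv : Measurable v) {c : ℝ}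
    (hc : ∀ y, ‖v y‖ ≤ c) (ℓ : ℝ) {p : ℝ} (hp : 3 ≤ p) (x : Euc d) :
    (incrMean v ℓ p x ≠ ⊤ ∧
    ∫ s, ‖incr v (ℓ • s) x‖ ∂ballMeas d ≤ (incrMean v ℓ p x).toReal) ∧
    ∫ s, ‖incr v (ℓ • s) x‖ ^ 2 ∂ballMeas d ≤ (incrMean v ℓ p x).toReal ^ 2 := by
  have hm : ∀ q, MemLp (fun s => incr v (ℓ • s) x) q (ballMeas d) := fun q =>
    MemLp.of_bound (measurable_incr hv ℓ x).aestronglyMeasurable (c + c)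
      (ae_of_all _ fun s => norm_incr_le hc _ _)
  have htop := (hm (ENNReal.ofReal p)).eLpNorm_ne_top
  have hmono : ∀ q : ℝ≥0∞, q ≤ 3 →
      (eLpNorm (fun s => incr v (ℓ • s) x) q (ballMeas d)).toReal ≤
        (incrMean v ℓ p x).toReal := fun q hq =>
    ENNReal.toReal_mono htop (eLpNorm_le_eLpNorm_of_exponent_le
      (hq.trans (by rw [← ENNReal.ofReal_ofNat]; exact ENNReal.ofReal_le_ofReal hp))
      (hm 1).aestronglyMeasurable)
  refine ⟨⟨htop, ?_⟩, ?_⟩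
  · have h := hmono 1 (by norm_num)
    rw [(hm 1).eLpNorm_eq_integral_rpow_norm (by simp) (by simp),
      ENNReal.toReal_ofReal (by positivity)] at h
    simpa using h
  · have h := hmono 2 (by norm_num)
    rw [(hm 2).eLpNorm_eq_integral_rpow_norm (by simp) (by simp),
      ENNReal.toReal_ofReal (by positivity)] at h
    have hI : 0 ≤ ∫ s, ‖incr v (ℓ • s) x‖ ^ 2 ∂ballMeas d :=
      integral_nonneg fun s => by positivity
    simp only [ENNReal.toReal_ofNat, Real.rpow_ofNat] at h
    rw [← one_div, ← Real.sqrt_eq_rpow] at h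
    exact (Real.sqrt_le_left (by positivity)).1 h

theorem abs_frobInner_le {P Q : Matrix (Fin d) (Fin d) ℝ} {s t : ℝ}
    (hP : ∀ i j, |P i j| ≤ s) (hQ : ∀ i j, |Q i j| ≤ t) :
    |frobInner P Q| ≤ d ^ 2 * (s * t) := by
  have : ∀ i j, |P i j * Q i j| ≤ s * t := fun i j => by
    rw [abs_mul]
    exact mul_le_mul (hP i j) (hQ i j) (abs_nonneg _) ((abs_nonneg _).trans (hP i j))
  calc |frobInner P Q| ≤ ∑ i, ∑ j, |P i j * Q i j| :=
        (Finset.abs_sum_le_sum_abs _ _).trans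
          (Finset.sum_le_sum fun i _ => Finset.abs_sum_le_sum_abs _ _)
    _ ≤ ∑ _i : Fin d, ∑ _j : Fin d, s * t :=
        Finset.sum_le_sum fun i _ => Finset.sum_le_sum fun j _ => this i j
    _ = d ^ 2 * (s * t) := by simp; ring

/-- Pointwise, `|Π_ℓ(x)| ≤ C ℓ⁻¹ S³` with `S` the `Lᵖ` mean of the increments at `x`: Galilean
invariance replaces `v` by `v - v(x)` in both the gradient and the stress. -/
theorem abs_deformWork_le {G : Euc d → ℝ} (hG : IsMollifier G) {K : ℝ} (hK : 0 ≤ K)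
    (hK₁ : ∀ s, |G s| ≤ K) (hK₂ : ∀ i s, |fderiv ℝ G s (e d i)| ≤ K)
    {R M : ℝ} (hR : 0 < R) (hM : 0 < M) {ρ : Euc d → ℝ} {v : Euc d → Euc d} {c : ℝ}
    (hρ : Measurable ρ) (hρR : ∀ y, |ρ y| ≤ R) (hv : Measurable v) (hc : ∀ y, ‖v y‖ ≤ c)
    {p ℓ : ℝ} (hp : 3 ≤ p) (hℓ : 0 < ℓ) {x : Euc d} (hx : 1 / M ≤ cg G ℓ ρ x)
    {a B : ℝ} (ha : a = K * ballVol d * R) (hB : B = M * a + M ^ 2 * a ^ 2) :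
    |deformWork G ℓ ρ v x| ≤ a * d ^ 2 * B ^ 2 * ℓ⁻¹ * (incrMean v ℓ p x).toReal ^ 3 := by
  obtain ⟨⟨-, hS₁⟩, hS₂⟩ := integral_norm_incr_le hv hc ℓ hp x
  set S := (incrMean v ℓ p x).toReal with hS
  have hS0 : 0 ≤ S := ENNReal.toReal_nonneg
  have ha0 : 0 ≤ a := by have := (ballVol_pos (d := d)).le; rw [ha]; positivity
  have hB0 : 0 ≤ B := by rw [hB]; positivity
  have hℓ0 : 0 < ℓ⁻¹ := inv_pos.2 hℓ
  have hc0 : 0 ≤ c := (norm_nonneg _).trans (hc 0)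
  have hvj : ∀ j, Measurable fun y => v y j := fun j => by fun_prop
  have hcj : ∀ y j, |v y j| ≤ c := fun y j => (PiLp.norm_apply_le (v y) j).trans (hc y)
  have hdj : ∀ s j, |v (x + ℓ • s) j - v x j| ≤ ‖incr v (ℓ • s) x‖ := fun s j =>
    PiLp.norm_apply_le (incr v (ℓ • s) x) j
  have hb : ∀ n : ℕ, Integrable (fun s => ‖incr v (ℓ • s) x‖ ^ n) (ballMeas d) := fun n =>
    Integrable.of_bound ((measurable_incr hv ℓ x).norm.pow_const n).aestronglyMeasurable
      ((c + c) ^ n) (ae_of_all _ fun s => by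
        rw [Real.norm_of_nonneg (by positivity)]
        exact pow_le_pow_left₀ (norm_nonneg _) (norm_incr_le hc _ _) n)
  have hb1 : Integrable (fun s => ‖incr v (ℓ • s) x‖) (ballMeas d) := by simpa using hb 1
  -- The density and the centred first and second moments.
  set P := cg G ℓ ρ with hPdef
  set N : Fin d → Euc d → ℝ := fun j => cg G ℓ fun y => ρ y * (v y j - v x j) with hN
  set N₂ : Fin d → Fin d → ℝ := fun i j =>
    cg G ℓ (fun y => ρ y * ((v y i - v x i) * (v y j - v x j))) x with hN₂
  have hP0 : 0 < P x := (one_div_pos.2 hM).trans_le hx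
  have hPinv : (P x)⁻¹ ≤ M := by
    rw [inv_le_comm₀ hP0 hM, ← one_div]; exact hx
  have hPinv0 : 0 < (P x)⁻¹ := inv_pos.2 hP0
  have hP₁ : |P x| ≤ a := by
    have := abs_cg_le hG hK hK₁ hℓ (f := ρ) (β := fun _ => 1) (x := x) (t := 1) hR.le
      (by simpa using fun s => hρR _) (integrable_const _) (by simp)
    simpa [ha] using this
  obtain ⟨DP, hDP, hDP₁⟩ := abs_deriv_cg_le hG hK hK₂ hℓ (f := ρ) (β := fun _ => 1) (x := x)
    (t := 1) hρ hρR hR.le (by simpa using fun s => hρR _) (integrable_const _) (by simp)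
  have hfN : ∀ j s, |ρ (x + ℓ • s) * (v (x + ℓ • s) j - v x j)| ≤
      R * ‖incr v (ℓ • s) x‖ := fun j s => by
    rw [abs_mul]; exact mul_le_mul (hρR _) (hdj s j) (abs_nonneg _) hR.le
  have hN₁ : ∀ j, |N j x| ≤ a * S := fun j => by
    rw [ha]; exact abs_cg_le hG hK hK₁ hℓ hR.le (hfN j) hb1 hS₁
  have hDN : ∀ j, ∃ D : Euc d →L[ℝ] ℝ, HasFDerivAt (N j) D x ∧
      ∀ i, |D (e d i)| ≤ ℓ⁻¹ * (K * ballVol d * R * S) := fun j =>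
    abs_deriv_cg_le hG hK hK₂ hℓ (c := R * (c + c))
      (hρ.mul ((hvj j).sub_const _))
      (fun y => by
        rw [Pi.mul_apply, abs_mul]
        exact mul_le_mul (hρR _) ((abs_sub _ _).trans (add_le_add (hcj _ _) (hcj _ _)))
          (abs_nonneg _) hR.le) hR.le (hfN j) hb1 hS₁
  choose DN hDN hDN₁ using hDN
  have hN₂₁ : ∀ i j, |N₂ i j| ≤ a * S ^ 2 := fun i j => by
    rw [ha]
    refine abs_cg_le hG hK hK₁ hℓ hR.le (fun s => ?_) (hb 2) hS₂
    rw [abs_mul, abs_mul, sq]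
    exact mul_le_mul (hρR _) (mul_le_mul (hdj s i) (hdj s j) (abs_nonneg _) (norm_nonneg _))
      (by positivity) hR.le
  -- Linearity of the coarse-graining, used to expand the centred moments.
  have hint0 : ∀ y, Integrable fun r => resc G ℓ r • ρ (y + r) := fun y =>
    integrable_resc_smul hG hℓ hρ.stronglyMeasurable hρR y
  have hint1 : ∀ j y, Integrable fun r => resc G ℓ r • (ρ (y + r) * v (y + r) j) := fun j y =>
    integrable_resc_smul hG hℓ (f := fun y => ρ y * v y j) (c := R * c)
      (hρ.mul (hvj j)).stronglyMeasurable (fun y => by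
        rw [norm_mul]; exact mul_le_mul (hρR _) (hcj _ _) (norm_nonneg _) hR.le) y
  have hint2 : ∀ i j y,
      Integrable fun r => resc G ℓ r • (ρ (y + r) * (v (y + r) i * v (y + r) j)) := fun i j y =>
    integrable_resc_smul hG hℓ (f := fun y => ρ y * (v y i * v y j)) (c := R * (c * c))
      (hρ.mul ((hvj i).mul (hvj j))).stronglyMeasurable (fun y => by
        rw [norm_mul, norm_mul]
        exact mul_le_mul (hρR _) (mul_le_mul (hcj _ _) (hcj _ _) (norm_nonneg _) hc0)
          (by positivity) hR.le) y
  have hNeq : ∀ j y, N j y = cg G ℓ (fun y => ρ y * v y j) y - v x j * P y := fun j y => by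
    simp only [hN, hPdef, cg]
    rw [← integral_const_mul, ← integral_sub (hint1 j y) ((hint0 y).const_mul _)]
    refine integral_congr_ae (ae_of_all _ fun r => ?_)
    simp only [smul_eq_mul]; ring
  have hN₂eq : ∀ i j, N₂ i j = cg G ℓ (fun y => ρ y * (v y i * v y j)) x
      - v x i * cg G ℓ (fun y => ρ y * v y j) x - v x j * N i x := fun i j => by
    simp only [hNeq]
    simp only [hN₂, hPdef, cg]
    rw [mul_sub, ← integral_const_mul, ← integral_const_mul, ← integral_const_mul,
      ← integral_const_mul, ← integral_sub (hint2 i j x) ((hint1 j x).const_mul _),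
      ← integral_sub ((hint1 i x).const_mul _) (((hint0 x).const_mul _).const_mul _),
      ← integral_sub ((hint2 i j x).sub' ((hint1 j x).const_mul _))
        (((hint1 i x).const_mul _).sub' (((hint0 x).const_mul _).const_mul _))]
    refine integral_congr_ae (ae_of_all _ fun r => ?_)
    simp only [smul_eq_mul]; ring
  have hfav : ∀ y j, 0 < P y → favre G ℓ ρ v y j = v x j + N j y * (P y)⁻¹ := by
    intro y j hy
    have h1 : favre G ℓ ρ v y = (P y)⁻¹ • cg G ℓ (fun y => ρ y • v y) y := if_pos hy
    have hne := hy.ne'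
    rw [h1, PiLp.smul_apply, cg_smul_apply hG hℓ hρ hρR hv hc, hNeq, smul_eq_mul]
    field_simp
    ring
  -- The stress is the covariance of the centred velocity.
  have hstress : ∀ i j, |favreStress G ℓ ρ v x i j| ≤ B * S ^ 2 := fun i j => by
    have heq : favreStress G ℓ ρ v x i j =
        (P x)⁻¹ * N₂ i j - (P x)⁻¹ ^ 2 * (N i x * N j x) := by
      have hne := hP0.ne'
      simp only [favreStress, Matrix.of_apply]
      rw [hfav x i hP0, hfav x j hP0, hN₂eq, hNeq, hNeq]
      change (P x)⁻¹ * _ - _ = _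
      field_simp
      ring
    rw [heq, hB]
    refine (abs_sub _ _).trans ?_
    rw [abs_mul, abs_mul, abs_mul, abs_of_pos hPinv0, abs_of_pos (pow_pos hPinv0 2)]
    calc _ ≤ M * (a * S ^ 2) + M ^ 2 * ((a * S) * (a * S)) := by
          gcongr
          · exact hN₂₁ i j
          · exact hN₁ i
          · exact hN₁ j
      _ = _ := by ring
  have hgrad : ∀ i j, |gradMat (favre G ℓ ρ v) x i j| ≤ ℓ⁻¹ * (B * S) := fun i j => by
    have hder : HasFDerivAt (fun y => favre G ℓ ρ v y j)
        (N j x • ((-(P x ^ 2)⁻¹) • DP) + (P x)⁻¹ • DN j) x := by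
      have h1 := ((hDN j).mul ((hasDerivAt_inv hP0.ne').comp_hasFDerivAt x hDP)).const_add (v x j)
      refine h1.congr_of_eventuallyEq ?_
      filter_upwards [hDP.continuousAt.eventually_const_lt hP0] with y hy
      simpa using hfav y j hy
    have heq : gradMat (favre G ℓ ρ v) x i j =
        (P x)⁻¹ * DN j (e d i) - (P x)⁻¹ ^ 2 * (N j x * DP (e d i)) := by
      simp only [gradMat, Matrix.of_apply, pd]
      rw [hder.fderiv]
      simp
      ring
    rw [heq, hB]
    refine (abs_sub _ _).trans ?_
    rw [abs_mul, abs_mul, abs_mul, abs_of_pos hPinv0, abs_of_pos (pow_pos hPinv0 2)]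
    have h1 := hDN₁ j i
    have h2 := hDP₁ i
    rw [← ha] at h1 h2
    calc _ ≤ M * (ℓ⁻¹ * (a * S)) + M ^ 2 * ((a * S) * (ℓ⁻¹ * (a * 1))) := by
          gcongr
          exact hN₁ j
      _ = _ := by ring
  have hfrob := abs_frobInner_le hgrad hstress
  rw [deformWork, abs_neg, abs_mul]
  calc _ ≤ a * (d ^ 2 * (ℓ⁻¹ * (B * S) * (B * S ^ 2))) :=
        mul_le_mul hP₁ hfrob (abs_nonneg _) ha0
    _ = _ := by ring

/-! ### Integration over the periodic box -/

/-- Tonelli: the `Lᵖ` norm in `x` of the means of the increments inherits any uniform `Lᵖ` bound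
on the increments. -/
theorem lintegral_incrMean_rpow_le {v : Euc d → Euc d} (hv : Measurable v) {ℓ p 𝓛 : ℝ}
    (hp : 3 ≤ p) (hℓ : 0 < ℓ) {Q : ℝ≥0∞}
    (hQ : ∀ r : Euc d, ‖r‖ ≤ ℓ →
      eLpNorm (incr v r) (ENNReal.ofReal p) (boxMeasure d 𝓛) ≤ Q) :
    ∫⁻ x, incrMean v ℓ p x ^ p ∂boxMeasure d 𝓛 ≤ Q ^ p := by
  have hp0 : 0 < p := by linarith
  have hpe : ENNReal.ofReal p ≠ 0 := (ENNReal.ofReal_pos.2 hp0).ne'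
  have key : ∀ (μ : Measure (Euc d)) (f : Euc d → Euc d),
      eLpNorm f (ENNReal.ofReal p) μ ^ p = ∫⁻ x, ‖f x‖ₑ ^ p ∂μ := fun μ f => by
    rw [eLpNorm_eq_lintegral_rpow_enorm_toReal hpe ENNReal.ofReal_ne_top,
      ENNReal.toReal_ofReal hp0.le, ← ENNReal.rpow_mul, one_div_mul_cancel hp0.ne',
      ENNReal.rpow_one]
  have : SFinite (boxMeasure d 𝓛) := by unfold boxMeasure; infer_instance
  simp only [incrMean, key]
  rw [lintegral_lintegral_swap]
  · calc _ ≤ ∫⁻ _s, Q ^ p ∂ballMeas d := by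
          refine lintegral_mono_ae ?_
          filter_upwards [ballMeas_ae_mem] with s hs
          rw [← key _ (incr v (ℓ • s))]
          refine ENNReal.rpow_le_rpow (hQ _ ?_) hp0.le
          rw [norm_smul, Real.norm_of_nonneg hℓ.le]
          exact mul_le_of_le_one_right hℓ.le (mem_ball_zero_iff.1 hs).le
      _ = Q ^ p := by simp
  · refine Measurable.aemeasurable ?_
    unfold incr Function.uncurry
    fun_prop

end QT

open QT in
/-- `L^{p/3}` deformation-work estimate
`‖Π_ℓ‖_{p/3} ≤ C A³ ℓ^{−1} (ℓ/L)^{3σ}`, with `C` depending only on `G, d, R, M`. -/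
theorem eLpNorm_deformWork_le {d : ℕ} (hd : 1 ≤ d)
    (G : Euc d → ℝ) (hG : IsMollifier G) (R M : ℝ) (hR : 0 < R) (hM : 0 < M) :
    ∃ C > 0, ∀ (𝓛 : ℝ) (ρ : Euc d → ℝ) (v : Euc d → Euc d) (Cv : ℝ), 0 < 𝓛 →
      Measurable ρ → (∀ y, 0 ≤ ρ y) → (∀ y, ρ y ≤ R) → PeriodicF 𝓛 ρ →
      Measurable v → (∀ y, ‖v y‖ ≤ Cv) → PeriodicF 𝓛 v →
      ∀ (p σ ℓ A L : ℝ), 3 ≤ p → σ ∈ Set.Ioc (0 : ℝ) 1 → 0 < ℓ → 0 < A → 0 < L →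
      (∀ r : Euc d, ‖r‖ ≤ ℓ →
        eLpNorm (incr v r) (ENNReal.ofReal p) (boxMeasure d 𝓛) ≤
          ENNReal.ofReal (A * (‖r‖ / L) ^ σ)) →
      (∀ᵐ x : Euc d, 1 / M ≤ cg G ℓ ρ x) →
      eLpNorm (fun x => deformWork G ℓ ρ v x) (ENNReal.ofReal (p / 3)) (boxMeasure d 𝓛) ≤
        ENNReal.ofReal (C * A ^ 3 * ℓ⁻¹ * (ℓ / L) ^ (3 * σ)) := by
  obtain ⟨K, hK, hK₁, hK₂⟩ := hG.exists_bound
  obtain ⟨a, ha⟩ : ∃ a, a = K * ballVol d * R := ⟨_, rfl⟩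
  obtain ⟨B, hB⟩ : ∃ B, B = M * a + M ^ 2 * a ^ 2 := ⟨_, rfl⟩
  have ha0 : 0 ≤ a := by have := (ballVol_pos (d := d)).le; rw [ha]; positivity
  -- Adding `1` keeps the constant positive.
  refine ⟨a * d ^ 2 * B ^ 2 + 1, by positivity, ?_⟩
  intro 𝓛 ρ v Cv _ hρ hρ0 hρR _ hv hc _ p σ ℓ A L hp hσ hℓ hA hL hinc hlow
  set C := a * d ^ 2 * B ^ 2 + 1 with hC
  have hC0 : 0 < C := by positivity
  have hp0 : 0 < p := by linarith
  have hp3 : 0 < p / 3 := by positivity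
  have hℓ0 : 0 < ℓ⁻¹ := inv_pos.2 hℓ
  set q := A * (ℓ / L) ^ σ with hq
  have hq0 : 0 ≤ q := by positivity
  have hQ := lintegral_incrMean_rpow_le (ℓ := ℓ) (𝓛 := 𝓛) (Q := ENNReal.ofReal q) hv hp hℓ
    fun r hr => (hinc r hr).trans <| ENNReal.ofReal_le_ofReal <| by
      rw [hq]
      have := hσ.1.le
      gcongr
  have hac : boxMeasure d 𝓛 ≪ volume :=
    Measure.smul_absolutelyContinuous.trans Measure.absolutelyContinuous_restrict
  have hpt : ∀ᵐ x ∂boxMeasure d 𝓛, ‖deformWork G ℓ ρ v x‖ₑ ^ (p / 3) ≤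
      ENNReal.ofReal (C * ℓ⁻¹) ^ (p / 3) * incrMean v ℓ p x ^ p := by
    filter_upwards [hac.ae_le hlow] with x hx
    have h := abs_deformWork_le hG hK hK₁ hK₂ hR hM hρ
      (fun y => (abs_of_nonneg (hρ0 y)).trans_le (hρR y)) hv hc hp hℓ hx ha hB
    have htop := (integral_norm_incr_le hv hc ℓ hp x).1.1
    have h' : ‖deformWork G ℓ ρ v x‖ₑ ≤ ENNReal.ofReal (C * ℓ⁻¹) * incrMean v ℓ p x ^ 3 := by
      rw [← ENNReal.ofReal_toReal htop, ← ENNReal.ofReal_pow ENNReal.toReal_nonneg,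
        ← ENNReal.ofReal_mul (by positivity), Real.enorm_eq_ofReal_abs]
      refine ENNReal.ofReal_le_ofReal (h.trans ?_)
      gcongr
      linarith
    refine (ENNReal.rpow_le_rpow h' hp3.le).trans_eq ?_
    rw [ENNReal.mul_rpow_of_nonneg _ _ hp3.le, ← ENNReal.rpow_natCast, ← ENNReal.rpow_mul]
    congr 2
    push_cast
    ring
  rw [eLpNorm_eq_lintegral_rpow_enorm_toReal (ENNReal.ofReal_pos.2 hp3).ne'
    ENNReal.ofReal_ne_top, ENNReal.toReal_ofReal hp3.le]
  calc _ ≤ (ENNReal.ofReal (C * ℓ⁻¹) ^ (p / 3) * ENNReal.ofReal q ^ p) ^ (1 / (p / 3)) := by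
        refine ENNReal.rpow_le_rpow ((lintegral_mono_ae hpt).trans ?_) (by positivity)
        rw [lintegral_const_mul' _ _
          (ENNReal.rpow_ne_top_of_nonneg hp3.le ENNReal.ofReal_ne_top)]
        gcongr
    _ = ENNReal.ofReal (C * ℓ⁻¹) * ENNReal.ofReal q ^ 3 := by
        rw [ENNReal.mul_rpow_of_nonneg _ _ (by positivity), ← ENNReal.rpow_mul,
          ← ENNReal.rpow_mul, mul_one_div_cancel hp3.ne', ENNReal.rpow_one,
          show p * (1 / (p / 3)) = ((3 : ℕ) : ℝ) by push_cast; field_simp, ENNReal.rpow_natCast]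
    _ = _ := by
        rw [← ENNReal.ofReal_pow hq0, ← ENNReal.ofReal_mul (by positivity)]
        congr 1
        rw [hq, mul_pow, mul_comm 3 σ, Real.rpow_mul (by positivity), Real.rpow_ofNat]
        ring
end
end
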